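/- arXiv:1307.1859 — 2 statements merged into one kernel-verified Lean document; each statement's English description precedes it below -/
import Mathlib

section
/- Let (T, Λ, μ) be a measurable space with σ-finite measure μ and let X: T × Ω → ℝ be a jointly measurable centered Gaussian random process, i.e. for every t ∈ T and λ ∈ ℝ, E exp(λ X(t)) = exp(λ² σ(t)²/2) where σ(t) := (E X(t)²)^{1/2}. Let p ≥ 1 and suppose c̃ := ∫_T (σ(t))^p dμ(t) < ∞. Then for every ε > c̃ · p^{p/2}, one has P{ ∫_T |X(t)|^p dμ(t) > ε } ≤ 2 exp{ −(1/2)(ε/c̃)^{2/p} }. -/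
open MeasureTheory Filter

lemma pt_bound (x s q : ℝ) (hs : 0 < s) (hq : 0 < q) :
    |x| ^ q ≤ (s * √q) ^ q * Real.exp (-q) *
      (Real.exp ((√q / s) * x) + Real.exp (-(√q / s) * x)) := by
  have hsq : 0 < √q := Real.sqrt_pos.2 hq
  have hy : |x| / (s * √q) ≤ Real.exp (|x| / (s * √q) - 1) := by
    have := Real.add_one_le_exp (|x| / (s * √q) - 1); linarith
  have h1 : (|x| / (s * √q)) ^ q ≤ Real.exp (√q / s * |x| - q) := by
    calc _ ≤ (Real.exp (|x| / (s * √q) - 1)) ^ q :=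
          Real.rpow_le_rpow (by positivity) hy hq.le
      _ = Real.exp (√q / s * |x| - q) := by
          rw [← Real.exp_mul]
          congr 1
          have : q = √q * √q := (Real.mul_self_sqrt hq.le).symm
          field_simp
          linear_combination |x| * this
  have h2 : Real.exp (√q / s * |x|) ≤
      Real.exp ((√q / s) * x) + Real.exp (-(√q / s) * x) := by
    rcases abs_cases x with h | h
    · rw [h.1]; linarith [Real.exp_pos (-(√q / s) * x)]
    · rw [h.1, mul_neg, ← neg_mul]; linarith [Real.exp_pos ((√q / s) * x)]
  rw [Real.div_rpow (abs_nonneg x) (by positivity), div_le_iff₀ (by positivity)] at h1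
  calc |x| ^ q ≤ _ := h1
    _ = (s * √q) ^ q * Real.exp (-q) * Real.exp (√q / s * |x|) := by
        rw [sub_eq_add_neg, Real.exp_add]; ring
    _ ≤ _ := by gcongr

section
variable {Ω : Type*} [MeasurableSpace Ω] (P : Measure Ω) [IsProbabilityMeasure P]
  (Z : Ω → ℝ) (s : ℝ)

lemma int_exp (hg : ∀ l : ℝ, (∫ ω, Real.exp (l * Z ω) ∂P) = Real.exp (l ^ 2 * s ^ 2 / 2))
    (l : ℝ) : Integrable (fun ω => Real.exp (l * Z ω)) P := by
  by_contra h
  have := hg l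
  rw [integral_undef h] at this
  exact absurd this (Real.exp_pos _).ne

lemma moment_bound
    (hg : ∀ l : ℝ, (∫ ω, Real.exp (l * Z ω) ∂P) = Real.exp (l ^ 2 * s ^ 2 / 2))
    (hs : 0 < s) (q : ℝ) (hq : 0 < q) :
    ∫⁻ ω, ENNReal.ofReal (|Z ω| ^ q) ∂P ≤
      ENNReal.ofReal (2 * √q ^ q * Real.exp (-q / 2) * s ^ q) := by
  have hi := int_exp P Z s hg
  have hsq : 0 ≤ √q := Real.sqrt_nonneg q
  calc _ ≤ ∫⁻ ω, ENNReal.ofReal ((s * √q) ^ q * Real.exp (-q) *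
      (Real.exp ((√q / s) * Z ω) + Real.exp (-(√q / s) * Z ω))) ∂P :=
        lintegral_mono fun ω => ENNReal.ofReal_le_ofReal (pt_bound _ _ _ hs hq)
    _ = ENNReal.ofReal (∫ ω, (s * √q) ^ q * Real.exp (-q) *
      (Real.exp ((√q / s) * Z ω) + Real.exp (-(√q / s) * Z ω)) ∂P) := by
        rw [ofReal_integral_eq_lintegral_ofReal]
        · exact ((hi _).add (hi _)).const_mul _
        · exact Eventually.of_forall fun ω => by positivity
    _ ≤ _ := by
        apply ENNReal.ofReal_le_ofReal
        rw [integral_const_mul, integral_add (hi _) (hi _), hg, hg]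
        have e1 : (√q / s) ^ 2 * s ^ 2 / 2 = q / 2 := by
          rw [div_pow, Real.sq_sqrt hq.le]; field_simp
        have e3 : Real.exp (-q) * Real.exp (q / 2) = Real.exp (-q / 2) := by
          rw [← Real.exp_add]; congr 1; ring
        rw [neg_sq, e1, ← e3, Real.mul_rpow hs.le hsq]
        apply le_of_eq; ring

lemma ae_zero (hZ : Measurable Z) (hs : s = Real.sqrt (∫ ω, (Z ω) ^ 2 ∂P))
    (hg : ∀ l : ℝ, (∫ ω, Real.exp (l * Z ω) ∂P) = Real.exp (l ^ 2 * s ^ 2 / 2))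
    (h0 : s = 0) : ∀ᵐ ω ∂P, Z ω = 0 := by
  have hi := int_exp P Z s hg
  have hint : Integrable (fun ω => Z ω ^ 2) P :=
    ProbabilityTheory.integrable_pow_of_integrable_exp_mul (t := 1) one_ne_zero (hi 1) (hi (-1)) 2
  have hnn : 0 ≤ ∫ ω, (Z ω) ^ 2 ∂P := integral_nonneg fun ω => sq_nonneg _
  have : ∫ ω, (Z ω) ^ 2 ∂P = 0 := by
    rw [h0] at hs
    exact (Real.sqrt_eq_zero hnn).1 hs.symm
  rw [integral_eq_zero_iff_of_nonneg (fun ω => sq_nonneg _) hint] at this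
  filter_upwards [this] with ω h
  simpa using h
end

/-- Gaussian specialization of the φ-sub-Gaussian concentration inequality:
for a centered Gaussian process, `P{∫ |X|^p dμ > ε} ≤ 2 exp(−(1/2)(ε/c̃)^{2/p})`
for `ε > c̃ p^{p/2}`, where `c̃ = ∫ σ(t)^p dμ(t)`. -/
theorem stmt_7 {T : Type*} [MeasurableSpace T] (μ : Measure T) [SigmaFinite μ]
    {Ω : Type*} [MeasurableSpace Ω] (P : Measure Ω) [IsProbabilityMeasure P]
    (X : T → Ω → ℝ) (hXmeas : Measurable (Function.uncurry X))
    (σ : T → ℝ) (hσ : ∀ t, σ t = Real.sqrt (∫ ω, (X t ω) ^ 2 ∂P))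
    (hgauss : ∀ (t : T) (l : ℝ),
      (∫ ω, Real.exp (l * X t ω) ∂P) = Real.exp (l ^ 2 * σ t ^ 2 / 2))
    (p : ℝ) (hp : 1 ≤ p)
    (hσp : Integrable (fun t => σ t ^ p) μ)
    (ctilde : ℝ) (hctilde : ctilde = ∫ t, σ t ^ p ∂μ) :
    ∀ ε : ℝ, ctilde * p ^ (p / 2) < ε →
      P {ω | ε < ∫ t, |X t ω| ^ p ∂μ} ≤
        ENNReal.ofReal (2 * Real.exp (-((1 / 2) * (ε / ctilde) ^ (2 / p)))) := by
  intro ε hε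
  have hp0 : 0 < p := by linarith
  have hσ0 : ∀ t, 0 ≤ σ t := fun t => by rw [hσ]; exact Real.sqrt_nonneg _
  have hc0 : 0 ≤ ctilde := by
    rw [hctilde]; exact integral_nonneg fun t => Real.rpow_nonneg (hσ0 t) _
  rcases hc0.eq_or_lt with hc | hc
  · rw [← hc, div_zero, Real.zero_rpow (by positivity)]
    refine prob_le_one.trans ?_
    simp
  have hε0 : 0 < ε := lt_of_le_of_lt (by positivity) hε
  have hR : p ^ (p / 2) < ε / ctilde := by rw [lt_div_iff₀ hc]; linarith
  set R := ε / ctilde with hRdef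
  have hR0 : 0 < R := by positivity
  set q := R ^ (2 / p) with hq
  have hq0 : 0 < q := by positivity
  have hpq : p < q := by
    have := Real.rpow_lt_rpow (by positivity) hR (show 0 < 2 / p by positivity)
    rwa [← Real.rpow_mul hp0.le, show p / 2 * (2 / p) = 1 by field_simp, Real.rpow_one] at this
  set r := q / p with hr
  have hr1 : 1 < r := by rw [hr, lt_div_iff₀ hp0]; linarith
  have hr0 : 0 < r := by linarith
  have hqr : q = p * r := by rw [hr]; field_simp
  have hsqrt : √q ^ q = R ^ r := by
    rw [Real.sqrt_eq_rpow, ← Real.rpow_mul hq0.le]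
    nth_rewrite 1 [hq]
    rw [← Real.rpow_mul hR0.le]
    congr 1
    rw [hr]; field_simp
  set K := 2 * √q ^ q * Real.exp (-q / 2) with hK
  have hK0 : 0 ≤ K := by positivity
  -- measurability
  have hσm : Measurable σ := by
    have : σ = fun t => Real.sqrt (∫ ω, (X t ω) ^ 2 ∂P) := funext hσ
    rw [this]
    have h2 : StronglyMeasurable (fun z : T × Ω => (Function.uncurry X z) ^ 2) :=
      (hXmeas.pow_const 2).stronglyMeasurable
    exact (h2.integral_prod_right (ν := P)).measurable.sqrt
  set A : Ω → ENNReal := fun ω => ∫⁻ t, ENNReal.ofReal (|X t ω| ^ p) ∂μ with hA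
  have hXm' : Measurable fun z : T × Ω => X z.1 z.2 := hXmeas
  have hXswap : Measurable fun z : Ω × T => X z.2 z.1 := hXm'.comp measurable_swap
  have hXω : ∀ ω, Measurable fun t => X t ω := fun ω => hXm'.comp measurable_prodMk_right
  have hXt : ∀ t, Measurable fun ω => X t ω := fun t => hXm'.comp measurable_prodMk_left
  have hAm : Measurable A := by
    have : Measurable (Function.uncurry fun ω t => ENNReal.ofReal (|X t ω| ^ p)) := by
      simp only [Function.uncurry_def]
      fun_prop
    exact this.lintegral_prod_right
  have hcE : ∫⁻ t, ENNReal.ofReal (σ t ^ p) ∂μ = ENNReal.ofReal ctilde := by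
    rw [hctilde, ofReal_integral_eq_lintegral_ofReal hσp]
    exact Eventually.of_forall fun t => Real.rpow_nonneg (hσ0 t) _
  -- a.e. vanishing
  have hae : ∀ᵐ ω ∂P, ∀ᵐ t ∂μ, σ t = 0 → X t ω = 0 := by
    have hms : MeasurableSet {z : T × Ω | σ z.1 = 0 → X z.1 z.2 = 0} := by
      have h1 : MeasurableSet {z : T × Ω | σ z.1 = 0} :=
        (hσm.comp measurable_fst) (measurableSet_singleton 0)
      have h2 : MeasurableSet {z : T × Ω | X z.1 z.2 = 0} := hXm' (measurableSet_singleton 0)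
      exact h1.imp h2
    rw [← Measure.ae_ae_comm hms]
    refine Eventually.of_forall fun t => ?_
    by_cases h0 : σ t = 0
    · filter_upwards [ae_zero P (X t) (σ t) (hXt t) (hσ t) (hgauss t) h0] with ω h _ using h
    · exact Eventually.of_forall fun ω h => absurd h h0
  set F : T → Ω → ENNReal := fun t ω => ENNReal.ofReal (|X t ω| ^ q * σ t ^ (-(p * (r - 1)))) with hF
  have hAF : ∀ᵐ ω ∂P, A ω ^ r ≤ (∫⁻ t, F t ω ∂μ) * ENNReal.ofReal ctilde ^ (r - 1) := by
    filter_upwards [hae] with ω hω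
    set f : T → ENNReal := fun t => ENNReal.ofReal (|X t ω| ^ p * σ t ^ (-(p * (r - 1) / r)))
    set g : T → ENNReal := fun t => ENNReal.ofReal (σ t ^ (p * (r - 1) / r))
    have hconj : r.HolderConjugate (r / (r - 1)) := Real.HolderConjugate.conjExponent hr1
    have hXω' := hXω ω
    have hH := ENNReal.lintegral_mul_le_Lp_mul_Lq μ hconj
      (f := f) (g := g) (by fun_prop) (by fun_prop)
    have e1 : A ω = ∫⁻ t, (f * g) t ∂μ := by
      apply lintegral_congr_ae
      filter_upwards [hω] with t ht
      simp only [Pi.mul_apply, f, g]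
      rw [← ENNReal.ofReal_mul (mul_nonneg (by positivity) (Real.rpow_nonneg (hσ0 t) _))]
      congr 1
      rcases (hσ0 t).eq_or_lt with h | h
      · rw [ht h.symm, abs_zero, Real.zero_rpow hp0.ne']; simp
      · rw [mul_assoc, ← Real.rpow_add h]; simp
    have e2 : ∀ t, f t ^ r = F t ω := by
      intro t
      have hn := Real.rpow_nonneg (hσ0 t) (-(p * (r - 1) / r))
      simp only [f, F]
      rw [ENNReal.ofReal_rpow_of_nonneg (mul_nonneg (by positivity) hn) hr0.le,
        Real.mul_rpow (by positivity) hn, ← Real.rpow_mul (abs_nonneg _),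
        ← Real.rpow_mul (hσ0 t), ← hqr]
      congr 3
      field_simp
    have e3 : ∀ t, g t ^ (r / (r - 1)) = ENNReal.ofReal (σ t ^ p) := by
      intro t
      have : 0 < r - 1 := by linarith
      simp only [g]
      rw [ENNReal.ofReal_rpow_of_nonneg (Real.rpow_nonneg (hσ0 t) _) (by positivity),
        ← Real.rpow_mul (hσ0 t)]
      congr 2
      field_simp
    simp_rw [e2, e3] at hH
    rw [← e1, hcE] at hH
    calc A ω ^ r ≤ _ := ENNReal.rpow_le_rpow hH hr0.le
      _ = _ := by
        rw [ENNReal.mul_rpow_of_nonneg _ _ hr0.le, ← ENNReal.rpow_mul, ← ENNReal.rpow_mul]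
        congr 1
        · rw [one_div_mul_cancel hr0.ne', ENNReal.rpow_one]
        · congr 1; field_simp
  have hFint : ∫⁻ ω, ∫⁻ t, F t ω ∂μ ∂P ≤ ENNReal.ofReal K * ENNReal.ofReal ctilde := by
    have hFm : Measurable (Function.uncurry fun ω t => F t ω) := by
      simp only [F, Function.uncurry_def]
      fun_prop
    rw [lintegral_lintegral_swap hFm.aemeasurable, ← hcE, ← lintegral_const_mul' _ _ (by simp)]
    apply lintegral_mono
    intro t
    simp only [F]
    have hn := Real.rpow_nonneg (hσ0 t) (-(p * (r - 1)))
    rcases (hσ0 t).eq_or_lt with h | h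
    · rw [← h, Real.zero_rpow]
      · simp
      · have : 0 < p * (r - 1) := mul_pos hp0 (by linarith)
        linarith
    · simp_rw [mul_comm _ (σ t ^ (-(p * (r - 1)))), ENNReal.ofReal_mul hn]
      rw [lintegral_const_mul' _ _ (by simp)]
      calc _ ≤ ENNReal.ofReal (σ t ^ (-(p * (r - 1)))) * ENNReal.ofReal (K * σ t ^ q) := by
            gcongr
            exact moment_bound P (X t) (σ t) (hgauss t) h q hq0
        _ = _ := by
            rw [← ENNReal.ofReal_mul hn, ← ENNReal.ofReal_mul hK0]
            congr 1
            rw [mul_left_comm, ← Real.rpow_add h]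
            congr 2
            rw [hqr]; ring
  have hAr : ∫⁻ ω, A ω ^ r ∂P ≤ ENNReal.ofReal (K * ctilde ^ r) := by
    calc _ ≤ ∫⁻ ω, (∫⁻ t, F t ω ∂μ) * ENNReal.ofReal ctilde ^ (r - 1) ∂P := lintegral_mono_ae hAF
      _ = (∫⁻ ω, ∫⁻ t, F t ω ∂μ ∂P) * ENNReal.ofReal ctilde ^ (r - 1) := by
          rw [lintegral_mul_const']
          exact ENNReal.rpow_ne_top_of_nonneg (by linarith) (by simp)
      _ ≤ ENNReal.ofReal K * ENNReal.ofReal ctilde * ENNReal.ofReal ctilde ^ (r - 1) := by gcongr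
      _ = _ := by
          rw [ENNReal.ofReal_rpow_of_pos hc, ← ENNReal.ofReal_mul hK0,
            ← ENNReal.ofReal_mul (by positivity)]
          congr 1
          rw [mul_assoc]
          congr 1
          nth_rewrite 1 [← Real.rpow_one ctilde]
          rw [← Real.rpow_add hc]; congr 1; ring
  have hsub : {ω | ε < ∫ t, |X t ω| ^ p ∂μ} ⊆ {ω | ENNReal.ofReal (ε ^ r) ≤ A ω ^ r} := by
    intro ω hω
    simp only [Set.mem_setOf_eq] at hω ⊢
    have hi : Integrable (fun t => |X t ω| ^ p) μ := by
      by_contra h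
      rw [integral_undef h] at hω; linarith
    rw [← ENNReal.ofReal_rpow_of_pos hε0]
    apply ENNReal.rpow_le_rpow _ hr0.le
    simp only [A]
    rw [← ofReal_integral_eq_lintegral_ofReal hi
      (Eventually.of_forall fun t => by positivity)]
    exact ENNReal.ofReal_le_ofReal hω.le
  have hεr : 0 < ε ^ r := by positivity
  have hM := meas_ge_le_lintegral_div (μ := P) (f := fun ω => A ω ^ r)
    (by fun_prop) (ε := ENNReal.ofReal (ε ^ r)) (by simpa using hεr) (by simp)
  calc _ ≤ _ := measure_mono hsub
    _ ≤ _ := hM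
    _ ≤ ENNReal.ofReal (K * ctilde ^ r) / ENNReal.ofReal (ε ^ r) := by gcongr
    _ = _ := by
        rw [← ENNReal.ofReal_div_of_pos hεr]
        congr 1
        rw [hK, hsqrt, hRdef, Real.div_rpow hε0.le hc.le]
        have : 0 < ctilde ^ r := by positivity
        rw [show -q / 2 = -(1 / 2 * q) by ring]
        field_simp
end

section
/- Let α > 0. Let R: ℝ → ℂ be a continuous integrable function whose Fourier transform R̂ is integrable, for which the Fourier inversion formula R(t) = (1/(2π)) ∫_ℝ e^{izt} R̂(z) dz holds for all t ∈ ℝ, and which satisfies ∫_ℝ |R̂(z)| |z|^α dz < ∞. Let ψ: ℝ → ℂ be integrable with ψ̂(0) = 0, and suppose ψ̂ is Hölder (Lipschitz of order α/2): there is L > 0 such that |ψ̂(y) − ψ̂(y′)| ≤ L |y − y′|^{α/2} for all y, y′ ∈ ℝ. For j ∈ ℕ₀, k ∈ ℤ set ψ_{jk}(x) := 2^{j/2} ψ(2^j x − k). Then for every j ∈ ℕ₀ and k ∈ ℤ, | ∫_ℝ ∫_ℝ R(u − v) conj(ψ_{jk}(u)) ψ_{jk}(v) du dv | ≤ (L²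 / (π · 2^{1 + j(1+α)})) ∫_ℝ |R̂(z)| |z|^α dz; in particular this bound is uniform in k and decays geometrically in j. -/
open MeasureTheory Complex

/-- The Fourier transform `ĝ(y) = ∫_ℝ e^{-iyx} g(x) dx`. -/
noncomputable def ft (g : ℝ → ℂ) (y : ℝ) : ℂ :=
  ∫ x : ℝ, Complex.exp (-(Complex.I * y * x)) * g x

/-- The dilated-translated wavelet `ψ_{jk}(x) = 2^{j/2} ψ(2^j x − k)`. -/
noncomputable def wav (ψ : ℝ → ℂ) (j : ℕ) (k : ℤ) (x : ℝ) : ℂ :=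
  (((2 : ℝ) ^ ((j : ℝ) / 2) : ℝ) : ℂ) * ψ ((2 : ℝ) ^ j * x - k)

lemma aux_norm (s z v : ℝ) : ‖Complex.exp (Complex.I * s * z * v)‖ = 1 := by
  have : Complex.I * s * z * v = ((s * z * v : ℝ) : ℂ) * Complex.I := by push_cast; ring
  rw [this, Complex.norm_exp_ofReal_mul_I]

lemma aux_swap (s : ℝ) (f g : ℝ → ℂ) (hf : Integrable f) (hg : Integrable g) :
    ∫ v : ℝ, (∫ z : ℝ, Complex.exp (Complex.I * s * z * v) * f z) * g v =
      ∫ z : ℝ, f z * ∫ v : ℝ, Complex.exp (Complex.I * s * z * v) * g v := by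
  simp_rw [← integral_mul_const, ← integral_const_mul]
  rw [integral_integral_swap]
  · congr 1; ext z; congr 1; ext v; ring
  · have h := (hg.mul_prod hf).bdd_mul (c := 1)
      (f := fun p : ℝ × ℝ => Complex.exp (Complex.I * s * p.2 * p.1))
      (by fun_prop) (Filter.Eventually.of_forall fun p => (aux_norm s p.2 p.1).le)
    refine h.congr (Filter.Eventually.of_forall fun p => ?_)
    simp only [Function.uncurry]
    ring

lemma ft_eq (g : ℝ → ℂ) (z : ℝ) :
    ft g z = ∫ v : ℝ, Complex.exp (Complex.I * (-1 : ℝ) * z * v) * g v := by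
  unfold ft
  congr 1; ext v; congr 2; push_cast; ring

lemma ft_cont (g : ℝ → ℂ) (hg : Integrable g) : Continuous (ft g) := by
  have : ft g = fun z : ℝ => ∫ v : ℝ, Complex.exp (Complex.I * (-1 : ℝ) * z * v) * g v := by
    ext z; exact ft_eq g z
  rw [this]
  refine continuous_of_dominated (bound := fun v => ‖g v‖) ?_ ?_ hg.norm ?_
  · intro z
    exact (Continuous.aestronglyMeasurable (by fun_prop)).mul hg.1
  · intro z
    exact Filter.Eventually.of_forall fun v => by rw [norm_mul, aux_norm, one_mul]
  · exact Filter.Eventually.of_forall fun v => by fun_prop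

lemma ft_bound (g : ℝ → ℂ) (z : ℝ) : ‖ft g z‖ ≤ ∫ v, ‖g v‖ := by
  rw [ft_eq]
  refine (norm_integral_le_integral_norm _).trans (le_of_eq ?_)
  congr 1; ext v; rw [norm_mul, aux_norm, one_mul]

lemma ft_conj (g : ℝ → ℂ) (z : ℝ) :
    ∫ v : ℝ, Complex.exp (Complex.I * (1 : ℝ) * z * v) * (starRingEnd ℂ) (g v) =
      (starRingEnd ℂ) (ft g z) := by
  unfold ft
  rw [← integral_conj]
  congr 1; ext v
  rw [map_mul, ← Complex.exp_conj]
  congr 2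
  simp

lemma ft_main (R φ : ℝ → ℂ) (hRhatint : Integrable (ft R))
    (hRinv : ∀ t : ℝ, R t =
      (1 / (2 * Real.pi) : ℝ) * ∫ z : ℝ, Complex.exp (Complex.I * z * t) * ft R z)
    (hφ : Integrable φ) :
    ∫ u : ℝ, ∫ v : ℝ, R (u - v) * (starRingEnd ℂ) (φ u) * φ v =
      (1 / (2 * Real.pi) : ℝ) * ∫ z : ℝ, ft R z * ft φ z * (starRingEnd ℂ) (ft φ z) := by
  have h1 : ∀ u : ℝ, ∫ v : ℝ, R (u - v) * (starRingEnd ℂ) (φ u) * φ v =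
      (1 / (2 * Real.pi) : ℝ) *
        ((∫ z : ℝ, Complex.exp (Complex.I * (1 : ℝ) * z * u) * (ft R z * ft φ z)) *
          (starRingEnd ℂ) (φ u)) := by
    intro u
    have hf : Integrable (fun z : ℝ => Complex.exp (Complex.I * (1 : ℝ) * z * u) * ft R z) :=
      hRhatint.bdd_mul (c := 1) (Continuous.aestronglyMeasurable (by fun_prop))
        (Filter.Eventually.of_forall fun z => (aux_norm 1 z u).le)
    have h := aux_swap (-1) _ φ hf hφ
    simp_rw [← ft_eq] at h
    have e : (∫ z : ℝ, Complex.exp (Complex.I * (1 : ℝ) * z * u) * (ft R z * ft φ z)) =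
        ∫ z : ℝ, Complex.exp (Complex.I * (1 : ℝ) * z * u) * ft R z * ft φ z := by
      congr 1; ext z; ring
    rw [e, ← h, mul_comm (∫ v : ℝ, _) ((starRingEnd ℂ) (φ u)), ← integral_const_mul,
      ← integral_const_mul]
    congr 1; ext v
    rw [hRinv (u - v)]
    have e2 : (∫ z : ℝ, Complex.exp (Complex.I * z * ((u - v : ℝ) : ℂ)) * ft R z) =
        ft (fun z : ℝ => Complex.exp (Complex.I * (1 : ℝ) * z * u) * ft R z) v := by
      unfold ft
      congr 1; ext z
      rw [← mul_assoc, ← Complex.exp_add]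
      congr 2; push_cast; ring
    have e3 : (∫ z : ℝ, Complex.exp (Complex.I * (-1 : ℝ) * z * v) *
        (Complex.exp (Complex.I * (1 : ℝ) * z * u) * ft R z)) =
        ft (fun z : ℝ => Complex.exp (Complex.I * (1 : ℝ) * z * u) * ft R z) v := by
      rw [ft_eq]
      congr 1; ext z; congr 2; ring
    rw [e2, e3]; ring
  simp_rw [h1]
  rw [integral_const_mul]
  congr 1
  have hf : Integrable (fun z => ft R z * ft φ z) :=
    hRhatint.mul_bdd (c := ∫ v, ‖φ v‖) (ft_cont φ hφ).aestronglyMeasurable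
      (Filter.Eventually.of_forall fun z => ft_bound φ z)
  have hc : Integrable (fun u => (starRingEnd ℂ) (φ u)) :=
    (LinearIsometryEquiv.integrable_comp_iff Complex.conjLIE).2 hφ
  rw [aux_swap 1 _ _ hf hc]
  simp_rw [ft_conj]

lemma wav_int (ψ : ℝ → ℂ) (hψ : Integrable ψ) (j : ℕ) (k : ℤ) : Integrable (wav ψ j k) := by
  unfold wav
  refine Integrable.const_mul ?_ _
  exact (hψ.comp_sub_right (k : ℝ)).comp_mul_left' (by positivity)

lemma ft_wav (ψ : ℝ → ℂ) (j : ℕ) (k : ℤ) (z : ℝ) :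
    ‖ft (wav ψ j k) z‖ = (2 : ℝ) ^ ((j : ℝ) / 2) * ((2 : ℝ) ^ j)⁻¹ * ‖ft ψ (z / 2 ^ j)‖ := by
  have h2 : (2 : ℝ) ^ j ≠ 0 := by positivity
  have e : ft (wav ψ j k) z = (((2 : ℝ) ^ ((j : ℝ) / 2) : ℝ) : ℂ) *
      ∫ x : ℝ, (fun y : ℝ => (fun w : ℝ => Complex.exp (Complex.I * (-1 : ℝ) * (z / 2 ^ j : ℝ) * k) *
        (Complex.exp (-(Complex.I * (z / 2 ^ j : ℝ) * w)) * ψ w)) (y - k)) ((2 : ℝ) ^ j * x) := by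
    unfold ft wav
    rw [← integral_const_mul]
    congr 1; ext x
    have : Complex.exp (-(Complex.I * z * x)) =
        Complex.exp (Complex.I * (-1 : ℝ) * (z / 2 ^ j : ℝ) * k) *
        Complex.exp (-(Complex.I * (z / 2 ^ j : ℝ) * ((2 ^ j * x - k : ℝ) : ℂ))) := by
      rw [← Complex.exp_add]
      congr 1; push_cast; field_simp; ring
    rw [this]; ring
  rw [e, Measure.integral_comp_mul_left (fun y : ℝ => (fun w : ℝ =>
      Complex.exp (Complex.I * (-1 : ℝ) * (z / 2 ^ j : ℝ) * k) *
        (Complex.exp (-(Complex.I * (z / 2 ^ j : ℝ) * w)) * ψ w)) (y - k)),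
    integral_sub_right_eq_self
    (fun w : ℝ => Complex.exp (Complex.I * (-1 : ℝ) * (z / 2 ^ j : ℝ) * k) *
        (Complex.exp (-(Complex.I * (z / 2 ^ j : ℝ) * w)) * ψ w)), integral_const_mul]
  have hn := aux_norm (-1) (z / 2 ^ j) (k : ℝ)
  rw [Complex.ofReal_intCast] at hn
  rw [norm_mul, norm_smul, norm_mul, hn, one_mul, Complex.norm_real, Real.norm_of_nonneg (by positivity),
    Real.norm_of_nonneg (by positivity), abs_of_pos (by positivity), mul_assoc]
  rfl

/-- Uniform-in-`k`, geometrically decaying in `j` bound: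
`|∫∫ R(u−v) conj(ψ_{jk}(u)) ψ_{jk}(v) du dv| ≤ (L²/(π 2^{1+j(1+α)})) ∫ |R̂(z)| |z|^α dz`. -/
theorem stmt_9 (α : ℝ) (hα : 0 < α)
    (R : ℝ → ℂ) (hRcont : Continuous R) (hRint : Integrable R)
    (hRhatint : Integrable (ft R))
    (hRinv : ∀ t : ℝ, R t =
      (1 / (2 * Real.pi) : ℝ) * ∫ z : ℝ, Complex.exp (Complex.I * z * t) * ft R z)
    (hRhatα : Integrable (fun z : ℝ => ‖ft R z‖ * |z| ^ α))
    (ψ : ℝ → ℂ) (hψint : Integrable ψ) (hψ0 : ft ψ 0 = 0)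
    (L : ℝ) (hL : 0 < L)
    (hHolder : ∀ y y' : ℝ, ‖ft ψ y - ft ψ y'‖ ≤ L * |y - y'| ^ (α / 2)) :
    ∀ (j : ℕ) (k : ℤ),
      ‖∫ u : ℝ, ∫ v : ℝ,
          R (u - v) * (starRingEnd ℂ) (wav ψ j k u) * wav ψ j k v‖ ≤
        (L ^ 2 / (Real.pi * (2 : ℝ) ^ ((1 : ℝ) + (j : ℝ) * (1 + α)))) *
          ∫ z : ℝ, ‖ft R z‖ * |z| ^ α := by
  intro j k
  rw [ft_main R _ hRhatint hRinv (wav_int ψ hψint j k), norm_mul, Complex.norm_real,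
    Real.norm_of_nonneg (by positivity)]
  have hb : ∀ z : ℝ, ‖ft R z * ft (wav ψ j k) z * (starRingEnd ℂ) (ft (wav ψ j k) z)‖ ≤
      L ^ 2 / (2 : ℝ) ^ ((j : ℝ) * (1 + α)) * (‖ft R z‖ * |z| ^ α) := by
    intro z
    have h0 := hHolder (z / 2 ^ j) 0
    rw [hψ0, sub_zero, sub_zero] at h0
    have hsq : ‖ft ψ (z / 2 ^ j)‖ ^ 2 ≤ L ^ 2 * (|z| ^ α / (2 : ℝ) ^ ((j : ℝ) * α)) := by
      refine (pow_le_pow_left₀ (norm_nonneg _) h0 2).trans (le_of_eq ?_)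
      rw [mul_pow, ← Real.rpow_natCast (|z / 2 ^ j| ^ (α / 2)), ← Real.rpow_mul (abs_nonneg _),
        abs_div, abs_of_pos (by positivity : (0 : ℝ) < 2 ^ j),
        Real.div_rpow (abs_nonneg _) (by positivity), ← Real.rpow_natCast 2 j,
        ← Real.rpow_mul (by norm_num)]
      norm_num
    have hc : ((2 : ℝ) ^ ((j : ℝ) / 2) * ((2 : ℝ) ^ j)⁻¹) ^ 2 = ((2 : ℝ) ^ j)⁻¹ := by
      rw [mul_pow, ← Real.rpow_natCast ((2 : ℝ) ^ ((j : ℝ) / 2)), ← Real.rpow_mul (by norm_num)]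
      have : (j : ℝ) / 2 * (2 : ℕ) = j := by push_cast; ring
      rw [this, Real.rpow_natCast]
      field_simp
    rw [norm_mul, norm_mul, RCLike.norm_conj, mul_assoc, ← pow_two, ft_wav, mul_pow, hc]
    have hp : (2 : ℝ) ^ ((j : ℝ) * (1 + α)) = 2 ^ j * (2 : ℝ) ^ ((j : ℝ) * α) := by
      rw [mul_add, mul_one, Real.rpow_add (by norm_num), Real.rpow_natCast]
    calc _ ≤ ‖ft R z‖ * (((2 : ℝ) ^ j)⁻¹ * (L ^ 2 * (|z| ^ α / (2 : ℝ) ^ ((j : ℝ) * α)))) := by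
          gcongr
      _ = _ := by rw [hp]; field_simp
  have hI := norm_integral_le_of_norm_le (hRhatα.const_mul _) (Filter.Eventually.of_forall hb)
  rw [integral_const_mul] at hI
  calc _ ≤ 1 / (2 * Real.pi) * (L ^ 2 / (2 : ℝ) ^ ((j : ℝ) * (1 + α)) *
        ∫ z : ℝ, ‖ft R z‖ * |z| ^ α) := by gcongr
    _ = _ := by
      rw [Real.rpow_add (by norm_num : (0 : ℝ) < 2) 1, Real.rpow_one]
      field_simp
end
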